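/- Let μ ∈ ℝ and σ > 0, and define f : ℝ → [0,1] by, with z = (x−μ)/σ: f(x) = 2/(9z²) if z ≥ √(4/3), f(x) = (3 − √3·z)/6 if 0 < z < √(4/3), and f(x) = 1 if z ≤ 0. Then: (i) for every Q ∈ H_US(μ,σ) and every α ∈ (0,1), Q({x : f(x) ≤ α}) ≤ α; and (ii) for every α ∈ (0,1/2], sup_{Q∈H_US(μ,σ)} Q({x : f(x) ≤ α}) = α. That is, f is a semi-precise p-variable for H_US(μ,σ). -/

import Mathlib

open MeasureTheory Set
open scoped ENNReal

/-- Mean of a distribution on ℝ. -/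
noncomputable def distMean (Q : Measure ℝ) : ℝ := ∫ x, x ∂Q

/-- Variance of a distribution on ℝ. -/
noncomputable def distVar (Q : Measure ℝ) : ℝ := ∫ x, (x - distMean Q)^2 ∂Q

/-- `H(μ,σ)`: Borel probability measures on ℝ with finite second moment,
mean at most `μ`, and variance at most `σ²`. -/
def MemH (μ σ : ℝ) (Q : Measure ℝ) : Prop :=
  IsProbabilityMeasure Q ∧ Integrable (fun x => x^2) Q ∧
    distMean Q ≤ μ ∧ distVar Q ≤ σ^2

/-- A distribution `Q` with mean `m` is symmetric if
`Q((-∞, m−x]) = Q([m+x, ∞))` for all `x`. -/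
def IsSymmetricDist (Q : Measure ℝ) : Prop :=
  ∀ x : ℝ, Q (Iic (distMean Q - x)) = Q (Ici (distMean Q + x))

/-- A distribution on ℝ is unimodal: for some `x₀` it is a nonnegative multiple of
the Dirac mass at `x₀` plus a measure with a Lebesgue density that is nondecreasing
on `(-∞, x₀)` and nonincreasing on `(x₀, ∞)`. -/
def Unimodal (Q : Measure ℝ) : Prop :=
  ∃ (x₀ : ℝ) (c : ℝ≥0∞) (f : ℝ → ℝ≥0∞),
    Q = c • Measure.dirac x₀ + volume.withDensity f ∧
    MonotoneOn f (Iio x₀) ∧ AntitoneOn f (Ioi x₀)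

/-- The p-variable for `H_US(μ,σ)`: with `z = (x−μ)/σ`, equals `2/(9z²)` if
`z ≥ √(4/3)`, `(3 − √3 z)/6` if `0 < z < √(4/3)`, and `1` if `z ≤ 0`. -/
noncomputable def pUS (μ σ : ℝ) (x : ℝ) : ℝ :=
  if Real.sqrt (4/3) ≤ (x - μ) / σ then 2 / (9 * ((x - μ) / σ)^2)
  else if 0 < (x - μ) / σ then (3 - Real.sqrt 3 * ((x - μ) / σ)) / 6
  else 1

/-!
On the half-line to the right of its mean `m`, a symmetric unimodal law `Q` has a nonincreasing
density, because by symmetry its mode can be placed at or to the left of `m`. Superlevel sets of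
that density are initial intervals, so a nonnegative `φ` even about `m` satisfies
`2 * Q [m + k, ∞) ≤ ∫ φ dQ` as soon as `|[m + k, t]| ≤ ∫ₘᵗ φ` for all `t`. For
`φ x = l * (x - m) ^ 2 + τ` this is a cubic inequality in `s = t - m`, and making it tight at
`s = r` gives a one-sided Gauss inequality. The best tangency point is
`r = max (√3 * σ) (3 * k / 2)`, and equality holds for a mixture of a Dirac mass and the uniform
law of half-width `r`. Hence `Q [x, ∞) ≤ pUS x`, and since every compact subset of `{pUS ≤ α}` lies
to the right of its own minimum, inner regularity makes `pUS` a p-variable.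
-/

lemma lintegral_eq_iSup_lintegral_measure_lt {α : Type*} [MeasurableSpace α] {μ : Measure α}
    {f : α → ℝ≥0∞} (hf : Measurable f) :
    ∫⁻ x, f x ∂μ = ⨆ n : ℕ, ∫⁻ t in Ioi (0 : ℝ), μ {x | t < (min (f x) n).toReal} := by
  have hsup (x : α) : f x = ⨆ n : ℕ, min (f x) n := by
    rw [← inf_iSup_eq, ENNReal.iSup_natCast, inf_top_eq]
  have hfin (n : ℕ) (x : α) : min (f x) n ≠ ∞ := ne_top_of_le_ne_top (by simp) (min_le_right _ _)
  calc ∫⁻ x, f x ∂μ = ⨆ n : ℕ, ∫⁻ x, min (f x) n ∂μ := by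
        rw [lintegral_congr hsup, lintegral_iSup (fun n => by fun_prop)]
        intro m n hmn x
        dsimp only
        gcongr
    _ = _ := by
        congr with n
        rw [← lintegral_eq_lintegral_meas_lt μ (.of_forall fun x => by positivity) (by fun_prop)]
        simp only [ENNReal.ofReal_toReal (hfin _ _)]

lemma lintegral_le_lintegral_of_measure_superlevel_le {α : Type*} [MeasurableSpace α]
    {μ ν : Measure α} {f : α → ℝ≥0∞} (hf : Measurable f)
    (h : ∀ t, μ {x | t < f x} ≤ ν {x | t < f x}) : ∫⁻ x, f x ∂μ ≤ ∫⁻ x, f x ∂ν := by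
  simp only [lintegral_eq_iSup_lintegral_measure_lt hf]
  refine iSup_mono fun n => setLIntegral_mono' measurableSet_Ioi fun t ht => ?_
  have hlt (x : α) : t < (min (f x) n).toReal ↔ ENNReal.ofReal t < f x ∧ ENNReal.ofReal t < n := by
    rw [← ENNReal.ofReal_lt_iff_lt_toReal (le_of_lt ht)
      (ne_top_of_le_ne_top (by simp) (min_le_right _ _)), lt_min_iff]
  by_cases hn : ENNReal.ofReal t < n
  · simpa only [hlt, hn, and_true] using h _
  · simp [hlt, hn]

lemma measure_le_of_forall_measure_Iic_le {α : Type*} [LinearOrder α] [TopologicalSpace α]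
    [ClosedIciTopology α] [MeasurableSpace α] {μ : Measure α} [μ.InnerRegular] {s : Set α}
    (hs : MeasurableSet s) {c : ℝ≥0∞} (h : ∀ x ∈ s, μ (Iic x) ≤ c) : μ s ≤ c := by
  rw [hs.measure_eq_iSup_isCompact]
  refine iSup₂_le fun K hKs => iSup_le fun hK => ?_
  obtain rfl | hne := K.eq_empty_or_nonempty
  · simp
  · obtain ⟨x, hxK, hx⟩ := hK.exists_isGreatest hne
    exact (measure_mono hx).trans (h x (hKs hxK))

lemma measure_le_of_forall_measure_Ici_le {α : Type*} [LinearOrder α] [TopologicalSpace α]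
    [ClosedIicTopology α] [MeasurableSpace α] {μ : Measure α} [μ.InnerRegular] {s : Set α}
    (hs : MeasurableSet s) {c : ℝ≥0∞} (h : ∀ x ∈ s, μ (Ici x) ≤ c) : μ s ≤ c :=
  have : @Measure.InnerRegular αᵒᵈ _ _ μ := ‹_›
  measure_le_of_forall_measure_Iic_le (α := αᵒᵈ) (μ := μ) hs h

lemma lintegral_le_of_antitone_of_measure_Iic_le {α : Type*} [LinearOrder α] [TopologicalSpace α]
    [OrderClosedTopology α] [MeasurableSpace α] [BorelSpace α] {μ ν : Measure α} [μ.InnerRegular]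
    {g : α → ℝ≥0∞} (hg : Antitone g) (h : ∀ x, μ (Iic x) ≤ ν (Iic x)) :
    ∫⁻ x, g x ∂μ ≤ ∫⁻ x, g x ∂ν := by
  refine lintegral_le_lintegral_of_measure_superlevel_le hg.measurable fun t => ?_
  refine measure_le_of_forall_measure_Iic_le (measurableSet_lt measurable_const hg.measurable)
    fun x hx => (h x).trans (measure_mono fun y hy => ?_)
  exact lt_of_lt_of_le hx (hg hy)

lemma map_sub_left_withDensity {G : Type*} [AddCommGroup G] [MeasurableSpace G] [MeasurableAdd G]
    [MeasurableNeg G] (μ : Measure G) [μ.IsNegInvariant] [μ.IsAddLeftInvariant] (a : G)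
    (f : G → ℝ≥0∞) :
    (μ.withDensity f).map (fun x => a - x) = μ.withDensity (fun x => f (a - x)) := by
  have hpres : MeasurePreserving (fun x => a - x) μ μ := Measure.measurePreserving_sub_left μ a
  ext s hs
  rw [Measure.map_apply hpres.measurable hs, withDensity_apply _ (hpres.measurable hs),
    withDensity_apply _ hs, ← hpres.setLIntegral_comp_preimage_emb
      (MeasurableEquiv.subLeft a).measurableEmbedding (fun x => f (a - x)) s]
  simp only [sub_sub_cancel]

lemma two_mul_setLIntegral_Ioi_le_of_map_reflect {Q : Measure ℝ} {m : ℝ}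
    (hQ : Q.map (fun x => 2 * m - x) = Q) {φ : ℝ → ℝ≥0∞} (hφ : Measurable φ)
    (heven : ∀ x, φ (2 * m - x) = φ x) :
    2 * ∫⁻ x in Ioi m, φ x ∂Q ≤ ∫⁻ x, φ x ∂Q := by
  have hrefl : ∫⁻ x in Ioi m, φ x ∂Q = ∫⁻ x in Iio m, φ x ∂Q := by
    conv_lhs => rw [← hQ]
    rw [setLIntegral_map measurableSet_Ioi hφ (by fun_prop), preimage_const_sub_Ioi]
    simp only [heven, show 2 * m - m = m by ring]
  calc 2 * ∫⁻ x in Ioi m, φ x ∂Q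
      = ∫⁻ x in Ioi m ∪ Iio m, φ x ∂Q := by
        rw [lintegral_union measurableSet_Iio (Iio_disjoint_Ioi_same.symm), ← hrefl, two_mul]
    _ ≤ ∫⁻ x, φ x ∂Q := setLIntegral_le_lintegral _ _

lemma isSymmetricDist_iff_map_reflect {Q : Measure ℝ} [IsFiniteMeasure Q] :
    IsSymmetricDist Q ↔ Q.map (fun x => 2 * distMean Q - x) = Q := by
  have hmap (a : ℝ) :
      Q.map (fun x => 2 * distMean Q - x) (Iic a) = Q (Ici (2 * distMean Q - a)) := by
    rw [Measure.map_apply (by fun_prop) measurableSet_Iic, preimage_const_sub_Iic]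
  refine ⟨fun h => Measure.ext_of_Iic _ _ fun a => ?_, fun h x => ?_⟩
  · rw [hmap, two_mul, add_sub_assoc, ← h, sub_sub_cancel]
  · rw [show distMean Q + x = 2 * distMean Q - (distMean Q - x) by ring, ← hmap, h]

namespace Unimodal

variable {Q : Measure ℝ} {m : ℝ}

lemma exists_mode_le_of_map_reflect (hu : Unimodal Q) (hQ : Q.map (fun x => 2 * m - x) = Q) :
    ∃ x₀ ≤ m, ∃ (c : ℝ≥0∞) (f : ℝ → ℝ≥0∞),
      Q = c • Measure.dirac x₀ + volume.withDensity f ∧ AntitoneOn f (Ioi x₀) := by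
  obtain ⟨x₀, c, f, hf, hmono, hanti⟩ := hu
  rcases le_total x₀ m with hle | hle
  · exact ⟨x₀, hle, c, f, hf, hanti⟩
  · refine ⟨2 * m - x₀, by linarith, c, fun x => f (2 * m - x), ?_, fun x hx y hy hxy => ?_⟩
    · have hmeas : Measurable (fun x : ℝ => 2 * m - x) := by fun_prop
      rw [← hQ, hf, Measure.map_add _ _ hmeas, Measure.map_smul, Measure.map_dirac' hmeas,
        map_sub_left_withDensity]
    · exact hmono (mem_Iio.2 (sub_lt_comm.1 hy)) (mem_Iio.2 (sub_lt_comm.1 hx)) (by gcongr)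

lemma exists_antitone_restrict_Ioi_eq_withDensity (hu : Unimodal Q)
    (hQ : Q.map (fun x => 2 * m - x) = Q) :
    ∃ g : ℝ → ℝ≥0∞, Antitone g ∧
      Q.restrict (Ioi m) = (volume.restrict (Ioi m)).withDensity g := by
  obtain ⟨x₀, hx₀, c, f, hf, hanti⟩ := hu.exists_mode_le_of_map_reflect hQ
  obtain ⟨g, hg, hfg⟩ := (hanti.mono (Ioi_subset_Ioi hx₀)).exists_antitone_extension
    (OrderBot.bddBelow _) (OrderTop.bddAbove _)
  refine ⟨g, hg, ?_⟩
  rw [hf, Measure.restrict_add, Measure.restrict_smul, restrict_dirac' measurableSet_Ioi,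
    if_neg (notMem_Ioi.2 hx₀), smul_zero, zero_add, restrict_withDensity measurableSet_Ioi]
  exact withDensity_congr_ae (ae_restrict_of_forall_mem measurableSet_Ioi hfg)

lemma two_mul_measure_Ici_le (hu : Unimodal Q) (hQ : Q.map (fun x => 2 * m - x) = Q)
    {φ : ℝ → ℝ≥0∞} (hφ : Measurable φ) (heven : ∀ x, φ (2 * m - x) = φ x) {a : ℝ} (ha : m < a)
    (h : ∀ t, volume (Icc a t) ≤ ∫⁻ x in Ioc m t, φ x) :
    2 * Q (Ici a) ≤ ∫⁻ x, φ x ∂Q := by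
  obtain ⟨g, hg, hdens⟩ := hu.exists_antitone_restrict_Ioi_eq_withDensity hQ
  have hsub : Ici a ⊆ Ioi m := Ici_subset_Ioi.2 ha
  have hdom (t : ℝ) : volume.restrict (Ici a) (Iic t) ≤
      (volume.restrict (Ioi m)).withDensity φ (Iic t) := by
    rw [Measure.restrict_apply measurableSet_Iic, withDensity_apply _ measurableSet_Iic,
      Measure.restrict_restrict measurableSet_Iic, inter_comm, Ici_inter_Iic, inter_comm,
      Ioi_inter_Iic]
    exact h t
  calc 2 * Q (Ici a) = 2 * ∫⁻ x in Ici a, g x := by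
        rw [← inter_eq_left.2 hsub, ← Measure.restrict_apply measurableSet_Ici, hdens,
          withDensity_apply _ measurableSet_Ici, Measure.restrict_restrict measurableSet_Ici]
    _ ≤ 2 * ∫⁻ x, g x ∂(volume.restrict (Ioi m)).withDensity φ := by
        gcongr 2 * ?_
        exact lintegral_le_of_antitone_of_measure_Iic_le hg hdom
    _ = 2 * ∫⁻ x in Ioi m, φ x ∂Q := by
        rw [hdens, lintegral_withDensity_eq_lintegral_mul _ hφ hg.measurable,
          lintegral_withDensity_eq_lintegral_mul _ hg.measurable hφ, mul_comm φ]
    _ ≤ ∫⁻ x, φ x ∂Q := two_mul_setLIntegral_Ioi_le_of_map_reflect hQ hφ heven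

end Unimodal

lemma setLIntegral_Ioc_ofReal_sq_add {m t l τ : ℝ} (ht : m ≤ t) (hl : 0 ≤ l) (hτ : 0 ≤ τ) :
    ∫⁻ x in Ioc m t, ENNReal.ofReal (l * (x - m) ^ 2 + τ) =
      ENNReal.ofReal (l * (t - m) ^ 3 / 3 + τ * (t - m)) := by
  rw [← ofReal_integral_eq_lintegral_ofReal
    ((by fun_prop : Continuous _).integrableOn_Ioc) (.of_forall fun x => by positivity),
    ← intervalIntegral.integral_of_le ht,
    intervalIntegral.integral_comp_sub_right (fun y => l * y ^ 2 + τ),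
    intervalIntegral.integral_add (Continuous.intervalIntegrable (by fun_prop) _ _) (by simp),
    intervalIntegral.integral_const_mul, integral_pow, intervalIntegral.integral_const,
    smul_eq_mul]
  congr 1
  ring

lemma lintegral_ofReal_sq_add_distVar {Q : Measure ℝ} [IsProbabilityMeasure Q]
    (hsq : Integrable (fun x => x ^ 2) Q) {l τ : ℝ} (hl : 0 ≤ l) (hτ : 0 ≤ τ) :
    ∫⁻ x, ENNReal.ofReal (l * (x - distMean Q) ^ 2 + τ) ∂Q =
      ENNReal.ofReal (l * distVar Q + τ) := by
  have hid : MemLp id 2 Q := (memLp_two_iff_integrable_sq (by fun_prop)).2 hsq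
  have hint : Integrable (fun x => l * (x - distMean Q) ^ 2) Q :=
    ((hid.sub (memLp_const (distMean Q))).integrable_sq).const_mul l
  rw [← ofReal_integral_eq_lintegral_ofReal (by exact hint.add (integrable_const τ))
    (.of_forall fun x => by positivity), integral_add hint (integrable_const τ),
    integral_const_mul, integral_const, probReal_univ, one_smul, distVar]

section Gauss

variable {Q : Measure ℝ} [IsProbabilityMeasure Q] {k : ℝ}

lemma Unimodal.measureReal_Ici_le_of_cubic (hu : Unimodal Q) (hs : IsSymmetricDist Q)
    (hsq : Integrable (fun x => x ^ 2) Q) {l τ : ℝ} (hk : 0 < k) (hl : 0 ≤ l) (hτ : 0 ≤ τ)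
    (h : ∀ s ≥ 0, s - k ≤ l * s ^ 3 / 3 + τ * s) :
    Q.real (Ici (distMean Q + k)) ≤ (l * distVar Q + τ) / 2 := by
  set m := distMean Q
  have hvar : 0 ≤ distVar Q := integral_nonneg fun x => sq_nonneg _
  have htail : 2 * Q (Ici (m + k)) ≤ ENNReal.ofReal (l * distVar Q + τ) := by
    rw [← lintegral_ofReal_sq_add_distVar hsq hl hτ]
    refine hu.two_mul_measure_Ici_le (isSymmetricDist_iff_map_reflect.1 hs) (by fun_prop)
      (fun x => by congr 1; ring) (by linarith) fun t => ?_
    rcases lt_or_ge t m with ht | ht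
    · rw [Icc_eq_empty_of_lt (by linarith), measure_empty]
      exact zero_le
    · rw [Real.volume_Icc, setLIntegral_Ioc_ofReal_sq_add ht hl hτ, ← sub_sub]
      exact ENNReal.ofReal_le_ofReal (h _ (sub_nonneg.2 ht))
  have hreal := ENNReal.toReal_mono ENNReal.ofReal_ne_top htail
  rw [ENNReal.toReal_mul, ENNReal.toReal_ofNat, ENNReal.toReal_ofReal (by positivity)] at hreal
  rw [measureReal_def]
  linarith

lemma Unimodal.measureReal_Ici_le (hu : Unimodal Q) (hs : IsSymmetricDist Q)
    (hsq : Integrable (fun x => x ^ 2) Q) {r : ℝ} (hk : 0 < k) (hr : 3 / 2 * k ≤ r) :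
    Q.real (Ici (distMean Q + k)) ≤ 1 / 2 - 3 * k / (4 * r) * (1 - distVar Q / r ^ 2) := by
  have hr0 : 0 < r := by linarith
  have hτ : 0 ≤ 1 - 3 * k / (2 * r) := by
    rw [sub_nonneg, div_le_one (by positivity)]
    linarith
  have htangent (s : ℝ) (hs : 0 ≤ s) :
      s - k ≤ 3 * k / (2 * r ^ 3) * s ^ 3 / 3 + (1 - 3 * k / (2 * r)) * s := by
    have hgap : 3 * k / (2 * r ^ 3) * s ^ 3 / 3 + (1 - 3 * k / (2 * r)) * s - (s - k) =
        k / (2 * r ^ 3) * ((s - r) ^ 2 * (s + 2 * r)) := by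
      field_simp
      ring
    have : 0 ≤ k / (2 * r ^ 3) * ((s - r) ^ 2 * (s + 2 * r)) := by positivity
    linarith
  refine (hu.measureReal_Ici_le_of_cubic hs hsq hk (by positivity) hτ htangent).trans_eq ?_
  field_simp
  ring

end Gauss

/-- The mixture with weight `1 - w` on the Dirac mass at `m` and weight `w` on the uniform law on
`[m - b, m + b]`; these are the extremal symmetric unimodal laws. -/
noncomputable def diracUniform (m w b : ℝ) : Measure ℝ :=
  ENNReal.ofReal (1 - w) • Measure.dirac m +
    ENNReal.ofReal (w / (2 * b)) • volume.restrict (Icc (m - b) (m + b))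

namespace diracUniform

variable {m w b : ℝ}

lemma map_reflect : (diracUniform m w b).map (fun x => 2 * m - x) = diracUniform m w b := by
  have hmeas : Measurable fun x : ℝ => 2 * m - x := by fun_prop
  have hIcc : (volume.restrict (Icc (m - b) (m + b))).map (fun x => 2 * m - x) =
      volume.restrict (Icc (m - b) (m + b)) := by
    have h := ((Measure.measurePreserving_sub_left volume (2 * m)).restrict_preimage
      (measurableSet_Icc (a := m - b) (b := m + b))).map_eq
    rwa [preimage_const_sub_Icc, show 2 * m - (m + b) = m - b by ring,
      show 2 * m - (m - b) = m + b by ring] at h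
  rw [diracUniform, Measure.map_add _ _ hmeas, Measure.map_smul, Measure.map_smul, hIcc,
    Measure.map_dirac' hmeas, show 2 * m - m = m by ring]

lemma unimodal : Unimodal (diracUniform m w b) := by
  refine ⟨m, ENNReal.ofReal (1 - w),
    (Icc (m - b) (m + b)).indicator fun _ => ENNReal.ofReal (w / (2 * b)), ?_, ?_, ?_⟩
  · rw [withDensity_indicator measurableSet_Icc, withDensity_const, diracUniform]
  · intro x _ y hy hxy
    refine indicator_apply_le' (fun hxI => ?_) fun _ => zero_le
    have hyI : y ∈ Icc (m - b) (m + b) :=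
      ⟨hxI.1.trans hxy, by linarith [hxI.1, mem_Iio.1 hy]⟩
    rw [indicator_of_mem hyI]
  · intro x hx y _ hxy
    refine indicator_apply_le' (fun hyI => ?_) fun _ => zero_le
    have hxI : x ∈ Icc (m - b) (m + b) :=
      ⟨by linarith [hyI.2, mem_Ioi.1 hx], hxy.trans hyI.2⟩
    rw [indicator_of_mem hxI]

lemma integrable {g : ℝ → ℝ} (hg : Continuous g) : Integrable g (diracUniform m w b) :=
  ((integrable_dirac (by simp)).smul_measure ENNReal.ofReal_ne_top).add_measure
    (hg.continuousOn.integrableOn_Icc.smul_measure ENNReal.ofReal_ne_top)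

section

variable (hw0 : 0 ≤ w) (hw1 : w ≤ 1) (hb : 0 < b)
include hw0 hw1 hb

lemma isProbabilityMeasure : IsProbabilityMeasure (diracUniform m w b) := by
  constructor
  have huniform : w / (2 * b) * (m + b - (m - b)) = w := by
    field_simp
    ring
  rw [diracUniform, Measure.add_apply, Measure.smul_apply, Measure.smul_apply, measure_univ,
    Measure.restrict_apply_univ, Real.volume_Icc, smul_eq_mul, smul_eq_mul, mul_one,
    ← ENNReal.ofReal_mul (by positivity), huniform, ← ENNReal.ofReal_add (by linarith) hw0,
    sub_add_cancel, ENNReal.ofReal_one]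

lemma integral_eq {g : ℝ → ℝ} (hg : Continuous g) :
    ∫ x, g x ∂diracUniform m w b =
      (1 - w) * g m + w / (2 * b) * ∫ x in (m - b)..(m + b), g x := by
  rw [diracUniform, integral_add_measure
    ((integrable_dirac (by simp)).smul_measure ENNReal.ofReal_ne_top)
    (hg.continuousOn.integrableOn_Icc.smul_measure ENNReal.ofReal_ne_top),
    integral_smul_measure, integral_smul_measure, integral_dirac,
    integral_Icc_eq_integral_Ioc, ← intervalIntegral.integral_of_le (by linarith),
    ENNReal.toReal_ofReal (by linarith), ENNReal.toReal_ofReal (by positivity), smul_eq_mul,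
    smul_eq_mul]

lemma distMean_eq : distMean (diracUniform m w b) = m := by
  rw [distMean, integral_eq hw0 hw1 hb continuous_id', integral_id]
  field_simp
  ring

lemma distVar_eq : distVar (diracUniform m w b) = w * b ^ 2 / 3 := by
  rw [distVar, distMean_eq hw0 hw1 hb, integral_eq hw0 hw1 hb (by fun_prop),
    intervalIntegral.integral_comp_sub_right (fun y => y ^ 2), integral_pow]
  field_simp
  ring

lemma isSymmetricDist : IsSymmetricDist (diracUniform m w b) := by
  have := isProbabilityMeasure (m := m) hw0 hw1 hb
  rw [isSymmetricDist_iff_map_reflect, distMean_eq hw0 hw1 hb, map_reflect]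

end

lemma measureReal_Ioi (hw0 : 0 ≤ w) (hb : 0 < b) {k : ℝ} (hk : 0 ≤ k) (hkb : k ≤ b) :
    (diracUniform m w b).real (Ioi (m + k)) = w * (b - k) / (2 * b) := by
  have hinter : Ioi (m + k) ∩ Icc (m - b) (m + b) = Ioc (m + k) (m + b) := by
    ext x
    simp only [mem_inter_iff, mem_Ioi, mem_Icc, mem_Ioc]
    exact ⟨fun h => ⟨h.1, h.2.2⟩, fun h => ⟨h.1, by linarith, h.2⟩⟩
  have hatom : Measure.dirac m (Ioi (m + k)) = 0 := by
    rw [Measure.dirac_apply' _ measurableSet_Ioi]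
    exact indicator_of_notMem (notMem_Ioi.2 (by linarith)) _
  rw [measureReal_def, diracUniform, Measure.add_apply, Measure.smul_apply, Measure.smul_apply,
    hatom, Measure.restrict_apply measurableSet_Ioi, hinter, Real.volume_Ioc, smul_zero, zero_add,
    smul_eq_mul, ENNReal.toReal_mul, ENNReal.toReal_ofReal (by positivity),
    ENNReal.toReal_ofReal (by linarith)]
  field_simp
  ring

end diracUniform

/-- The sharp one-sided Gauss bound: the largest probability with which a symmetric unimodal law
exceeds its mean by more than `z ≥ 0` standard deviations. -/
noncomputable def gaussBound (z : ℝ) : ℝ :=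
  if √(4 / 3) ≤ z then 2 / (9 * z ^ 2) else (3 - √3 * z) / 6

/-- Half-width, in standard deviations, of the uniform part of the law attaining `gaussBound z`. -/
noncomputable def gaussRadius (z : ℝ) : ℝ := max √3 (3 / 2 * z)

lemma gaussRadius_pos (z : ℝ) : 0 < gaussRadius z :=
  lt_max_of_lt_left (by positivity)

lemma sqrt_four_thirds : √(4 / 3 : ℝ) = 2 / 3 * √3 := by
  rw [show (4 / 3 : ℝ) = (2 / 3) ^ 2 * 3 by norm_num, Real.sqrt_mul (by norm_num),
    Real.sqrt_sq (by norm_num)]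

lemma sqrt_four_thirds_le_iff {z : ℝ} : √(4 / 3) ≤ z ↔ √3 ≤ 3 / 2 * z := by
  rw [sqrt_four_thirds]
  constructor <;> intro h <;> linarith

lemma gaussBound_eq_lower (z : ℝ) :
    gaussBound z = 3 / gaussRadius z ^ 2 * (gaussRadius z - z) / (2 * gaussRadius z) := by
  have hsq : √(3 : ℝ) ^ 2 = 3 := Real.sq_sqrt (by norm_num)
  have hr := gaussRadius_pos z
  rw [gaussBound, gaussRadius]
  split_ifs with h
  · rw [sqrt_four_thirds_le_iff] at h
    rw [gaussRadius, max_eq_right h] at hr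
    have hz : z ≠ 0 := by rintro rfl; simp at hr
    rw [max_eq_right h]
    field_simp
    norm_num
  · rw [sqrt_four_thirds_le_iff, not_le] at h
    rw [max_eq_left h.le, hsq]
    field_simp
    linear_combination (-2 * z) * hsq

lemma gaussBound_eq_upper (z : ℝ) :
    gaussBound z = 1 / 2 - 3 * z / (4 * gaussRadius z) * (1 - 1 / gaussRadius z ^ 2) := by
  have hsq : √(3 : ℝ) ^ 2 = 3 := Real.sq_sqrt (by norm_num)
  have hr := gaussRadius_pos z
  rw [gaussBound_eq_lower]
  have hslack : (gaussRadius z ^ 2 - 3) * (2 * gaussRadius z - 3 * z) = 0 := by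
    rcases max_choice √3 (3 / 2 * z) with h | h <;> rw [gaussRadius, h]
    · rw [hsq, sub_self, zero_mul]
    · ring
  field_simp
  linear_combination -2 * hslack

lemma antitone_gaussBound : Antitone gaussBound := by
  have hsq : √(3 : ℝ) ^ 2 = 3 := Real.sq_sqrt (by norm_num)
  have h43 : √(4 / 3 : ℝ) ^ 2 = 4 / 3 := Real.sq_sqrt (by norm_num)
  have h43_pos : 0 < √(4 / 3 : ℝ) := by positivity
  intro x y hxy
  unfold gaussBound
  split_ifs with hy hx hx
  · have hx0 : 0 < x := h43_pos.trans_le hx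
    gcongr
  · have hlow : 4 / 3 ≤ y ^ 2 := h43 ▸ pow_le_pow_left₀ h43_pos.le hy 2
    have hquad : 2 / (9 * y ^ 2) ≤ 1 / 6 := by
      rw [div_le_div_iff₀ (by positivity) (by norm_num)]
      linarith
    have hlin : √3 * x ≤ 2 := by
      rw [sqrt_four_thirds, not_le] at hx
      calc √3 * x ≤ √3 * (2 / 3 * √3) := by gcongr
        _ = 2 := by linear_combination (2 / 3) * hsq
    linarith
  · exact absurd (hx.trans hxy) hy
  · gcongr

lemma exists_gaussBound_eq {α : ℝ} (hα : α ∈ Ioc (0 : ℝ) (1 / 2)) : ∃ z ≥ 0, gaussBound z = α := by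
  obtain ⟨hα0, hα2⟩ := hα
  rcases le_or_gt α (1 / 6) with h | h
  · refine ⟨√(2 / (9 * α)), Real.sqrt_nonneg _, ?_⟩
    have hbranch : √(4 / 3) ≤ √(2 / (9 * α)) := by
      refine Real.sqrt_le_sqrt ?_
      rw [div_le_div_iff₀ (by norm_num) (by positivity)]
      linarith
    rw [gaussBound, if_pos hbranch, Real.sq_sqrt (by positivity)]
    field_simp
  · refine ⟨√3 * (1 - 2 * α), mul_nonneg (Real.sqrt_nonneg _) (by linarith), ?_⟩
    have hbranch : √3 * (1 - 2 * α) < √(4 / 3) := by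
      rw [sqrt_four_thirds, mul_comm]
      gcongr
      linarith
    rw [gaussBound, if_neg hbranch.not_ge, ← mul_assoc, Real.mul_self_sqrt (by norm_num)]
    ring

lemma Unimodal.measureReal_Ici_le_gaussBound {Q : Measure ℝ} [IsProbabilityMeasure Q]
    (hu : Unimodal Q) (hs : IsSymmetricDist Q) (hsq : Integrable (fun x => x ^ 2) Q) {σ z : ℝ}
    (hσ : 0 < σ) (hvar : distVar Q ≤ σ ^ 2) (hz : 0 < z) :
    Q.real (Ici (distMean Q + σ * z)) ≤ gaussBound z := by
  have hr := gaussRadius_pos z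
  have htangency : 3 / 2 * (σ * z) ≤ σ * gaussRadius z := by
    rw [mul_left_comm]
    gcongr
    exact le_max_right _ _
  calc Q.real (Ici (distMean Q + σ * z))
      ≤ 1 / 2 - 3 * (σ * z) / (4 * (σ * gaussRadius z)) *
          (1 - distVar Q / (σ * gaussRadius z) ^ 2) :=
        hu.measureReal_Ici_le hs hsq (by positivity) htangency
    _ ≤ 1 / 2 - 3 * (σ * z) / (4 * (σ * gaussRadius z)) *
          (1 - σ ^ 2 / (σ * gaussRadius z) ^ 2) := by gcongr
    _ = gaussBound z := by
        rw [gaussBound_eq_upper]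
        field_simp

lemma diracUniform.exists_measureReal_Ioi_eq_gaussBound (μ : ℝ) {σ z : ℝ} (hσ : 0 < σ)
    (hz : 0 ≤ z) :
    ∃ Q, MemH μ σ Q ∧ IsSymmetricDist Q ∧ Unimodal Q ∧
      Q.real (Ioi (μ + σ * z)) = gaussBound z := by
  have hr := gaussRadius_pos z
  have hw0 : 0 ≤ 3 / gaussRadius z ^ 2 := by positivity
  have hw1 : 3 / gaussRadius z ^ 2 ≤ 1 := by
    rw [div_le_one (by positivity), ← Real.sqrt_le_left hr.le]
    exact le_max_left _ _
  have hb : 0 < σ * gaussRadius z := by positivity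
  have hzr : z ≤ gaussRadius z := le_max_of_le_right (by linarith)
  refine ⟨diracUniform μ (3 / gaussRadius z ^ 2) (σ * gaussRadius z),
    ⟨isProbabilityMeasure hw0 hw1 hb, integrable (by fun_prop),
      (distMean_eq hw0 hw1 hb).le, ?_⟩, isSymmetricDist hw0 hw1 hb, unimodal, ?_⟩
  · rw [distVar_eq hw0 hw1 hb]
    field_simp
    exact le_rfl
  · rw [measureReal_Ioi hw0 hb (by positivity) (by gcongr), gaussBound_eq_lower]
    field_simp

section PVariable

variable {μ σ x : ℝ}

lemma pUS_of_nonpos (h : (x - μ) / σ ≤ 0) : pUS μ σ x = 1 := by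
  rw [pUS, if_neg (h.trans_lt (by positivity)).not_ge, if_neg h.not_gt]

lemma pUS_of_pos (h : 0 < (x - μ) / σ) : pUS μ σ x = gaussBound ((x - μ) / σ) := by
  rw [pUS, if_pos h, gaussBound]

lemma measurable_pUS : Measurable (pUS μ σ) :=
  Measurable.ite (measurableSet_le (by fun_prop) (by fun_prop)) (by fun_prop)
    (Measurable.ite (measurableSet_lt (by fun_prop) (by fun_prop)) (by fun_prop) (by fun_prop))

lemma measureReal_Ici_le_pUS (hσ : 0 < σ) {Q : Measure ℝ} (hQ : MemH μ σ Q)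
    (hs : IsSymmetricDist Q) (hu : Unimodal Q) : Q.real (Ici x) ≤ pUS μ σ x := by
  obtain ⟨_, hsq, hmean, hvar⟩ := hQ
  rcases le_or_gt ((x - μ) / σ) 0 with hz | hz
  · rw [pUS_of_nonpos hz]
    exact measureReal_le_one
  · rw [pUS_of_pos hz]
    have hx : distMean Q + σ * ((x - μ) / σ) ≤ x := by
      rw [mul_div_cancel₀ _ hσ.ne']
      linarith
    exact (measureReal_mono (Ici_subset_Ici.2 hx)).trans
      (hu.measureReal_Ici_le_gaussBound hs hsq hσ hvar hz)

lemma measureReal_pUS_le (hσ : 0 < σ) {Q : Measure ℝ} (hQ : MemH μ σ Q)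
    (hs : IsSymmetricDist Q) (hu : Unimodal Q) {α : ℝ} (hα : 0 ≤ α) :
    Q.real {x | pUS μ σ x ≤ α} ≤ α := by
  have := hQ.1
  refine ENNReal.toReal_le_of_le_ofReal hα (measure_le_of_forall_measure_Ici_le
    (measurableSet_le measurable_pUS measurable_const) fun x hx => ?_)
  rw [← ofReal_measureReal]
  exact ENNReal.ofReal_le_ofReal ((measureReal_Ici_le_pUS hσ hQ hs hu).trans hx)

lemma exists_le_measureReal_pUS (μ : ℝ) (hσ : 0 < σ) {α : ℝ} (hα : α ∈ Ioc (0 : ℝ) (1 / 2)) :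
    ∃ Q, MemH μ σ Q ∧ IsSymmetricDist Q ∧ Unimodal Q ∧ α ≤ Q.real {x | pUS μ σ x ≤ α} := by
  obtain ⟨z, hz, rfl⟩ := exists_gaussBound_eq hα
  obtain ⟨Q, hQ, hs, hu, hQz⟩ := diracUniform.exists_measureReal_Ioi_eq_gaussBound μ hσ hz
  have := hQ.1
  have hsub : Ioi (μ + σ * z) ⊆ {x | pUS μ σ x ≤ gaussBound z} := fun x hx => by
    have hzx : z < (x - μ) / σ := (lt_div_iff₀' hσ).2 (lt_sub_iff_add_lt'.2 hx)
    rw [mem_ofPred_eq, pUS_of_pos (hz.trans_lt hzx)]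
    exact antitone_gaussBound hzx.le
  exact ⟨Q, hQ, hs, hu, hQz.symm.trans_le (measureReal_mono hsub)⟩

end PVariable

/-- `pUS μ σ` is a semi-precise p-variable for `H_US(μ,σ)`:
(i) valid for all `α ∈ (0,1)`; (ii) for `α ∈ (0,1/2]` the sup of `Q({pUS ≤ α})`
over `H_US(μ,σ)` equals `α`. -/
theorem stmt_15 (μ σ : ℝ) (hσ : 0 < σ) :
    (∀ Q : Measure ℝ, MemH μ σ Q → IsSymmetricDist Q → Unimodal Q →
      ∀ α ∈ Ioo (0:ℝ) 1, (Q {x | pUS μ σ x ≤ α}).toReal ≤ α) ∧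
    (∀ α ∈ Ioc (0:ℝ) (1/2),
      IsLUB {r : ℝ | ∃ Q : Measure ℝ, MemH μ σ Q ∧ IsSymmetricDist Q ∧ Unimodal Q ∧
        r = (Q {x | pUS μ σ x ≤ α}).toReal} α) := by
  refine ⟨fun Q hQ hs hu α hα => measureReal_pUS_le hσ hQ hs hu hα.1.le,
    fun α hα => IsGreatest.isLUB ⟨?_, ?_⟩⟩
  · obtain ⟨Q, hQ, hs, hu, hle⟩ := exists_le_measureReal_pUS μ hσ hα
    exact ⟨Q, hQ, hs, hu, hle.antisymm (measureReal_pUS_le hσ hQ hs hu hα.1.le)⟩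
  · rintro _ ⟨Q, hQ, hs, hu, rfl⟩
    exact measureReal_pUS_le hσ hQ hs hu hα.1.le
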